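/- arXiv:1111.0120 — 5 statements merged into one kernel-verified Lean document; each statement's English description precedes it below -/
import Mathlib

section
/- Let U ⊆ ℝ be an open set, V : ℝ → ℂ a function, λ₁ ∈ ℂ, and ψ₁ : ℝ → ℂ a function that is twice differentiable on U, nonvanishing on U, and satisfies ψ₁''(x) = (V(x) − λ₁)·ψ₁(x) for all x ∈ U. Define V₊(x) = V(x) − 2·(d/dx)(ψ₁'/ψ₁)(x). Then the function Ψ⁺ = 1/ψ₁ satisfies the transformed Schrödinger equation at the same eigenvalue: −Ψ⁺''(x) + V₊(x)·Ψ⁺(x) = λ₁·Ψ⁺(x) for all x ∈ U. -/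
/-!
The logarithmic derivative `w = ψ₁' / ψ₁` turns the eigenvalue equation for `ψ₁` into the Riccati
equation `w' + w² = V - λ₁`. Replacing `ψ₁` by its inverse replaces `w` by `-w`, so `1 / ψ₁` solves
the equation whose potential term is `-w' + w² = V - 2 w' - λ₁`.
-/

open Filter Topology

section

variable {𝕜 𝕜' : Type*} [NontriviallyNormedField 𝕜] [NontriviallyNormedField 𝕜']
  [NormedAlgebra 𝕜 𝕜'] {f : 𝕜 → 𝕜'} {x : 𝕜}

theorem logDeriv_fun_inv (hf : DifferentiableAt 𝕜 f x) :
    logDeriv (fun t => (f t)⁻¹) x = -logDeriv f x := by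
  simpa using logDeriv_fun_zpow hf (-1)

theorem deriv_deriv_eq_logDeriv_mul (hf : DifferentiableAt 𝕜 f x)
    (hw : DifferentiableAt 𝕜 (logDeriv f) x) (hx : f x ≠ 0) :
    deriv (deriv f) x = (deriv (logDeriv f) x + logDeriv f x ^ 2) * f x := by
  have hderiv : ∀ᶠ t in 𝓝 x, deriv f t = logDeriv f t * f t := by
    filter_upwards [hf.continuousAt.eventually_ne hx] with t ht
    exact (div_mul_cancel₀ (deriv f t) ht).symm
  calc deriv (deriv f) x
      = deriv (fun t => logDeriv f t * f t) x := EventuallyEq.deriv_eq hderiv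
    _ = deriv (logDeriv f) x * f x + logDeriv f x * deriv f x := deriv_fun_mul hw hf
    _ = (deriv (logDeriv f) x + logDeriv f x ^ 2) * f x := by
      rw [hderiv.self_of_nhds]
      ring

theorem deriv_deriv_fun_inv (hf : ∀ᶠ t in 𝓝 x, DifferentiableAt 𝕜 f t)
    (hw : DifferentiableAt 𝕜 (logDeriv f) x) (hx : f x ≠ 0) :
    deriv (deriv fun t => (f t)⁻¹) x =
      (-deriv (logDeriv f) x + logDeriv f x ^ 2) * (f x)⁻¹ := by
  have hlog : logDeriv (fun t => (f t)⁻¹) =ᶠ[𝓝 x] fun t => -logDeriv f t :=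
    hf.mono fun _ => logDeriv_fun_inv
  have hinv : DifferentiableAt 𝕜 (fun t => (f t)⁻¹) x := hf.self_of_nhds.fun_inv hx
  have hw_inv : DifferentiableAt 𝕜 (logDeriv fun t => (f t)⁻¹) x :=
    hw.fun_neg.congr_of_eventuallyEq hlog
  rw [deriv_deriv_eq_logDeriv_mul hinv hw_inv (inv_ne_zero hx), hlog.deriv_eq, hlog.self_of_nhds,
    deriv.fun_neg, neg_sq]

/-- The partner potential `V₊ = V - 2 (ψ' / ψ)'` produced from `V` by the Darboux transformation
with seed function `ψ`. It is meaningful only where `ψ` is nonzero and twice differentiable;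
elsewhere it takes the default values of `/` and `deriv`. -/
noncomputable def darbouxPotential (V ψ : 𝕜 → 𝕜') (x : 𝕜) : 𝕜' :=
  V x - 2 * deriv (logDeriv ψ) x

theorem darboux_transform_of_particular_solution_general {V ψ₁ : 𝕜 → 𝕜'} {lam₁ : 𝕜'}
    (hd1 : ∀ᶠ t in 𝓝 x, DifferentiableAt 𝕜 ψ₁ t) (hd2 : DifferentiableAt 𝕜 (deriv ψ₁) x)
    (hne : ψ₁ x ≠ 0) (heq : deriv (deriv ψ₁) x = (V x - lam₁) * ψ₁ x) :
    -(deriv (deriv fun t => (ψ₁ t)⁻¹) x) + darbouxPotential V ψ₁ x * (ψ₁ x)⁻¹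
      = lam₁ * (ψ₁ x)⁻¹ := by
  have hw : DifferentiableAt 𝕜 (logDeriv ψ₁) x := hd2.div hd1.self_of_nhds hne
  have riccati : deriv (logDeriv ψ₁) x + logDeriv ψ₁ x ^ 2 = V x - lam₁ :=
    mul_right_cancel₀ hne ((deriv_deriv_eq_logDeriv_mul hd1.self_of_nhds hw hne).symm.trans heq)
  rw [deriv_deriv_fun_inv hd1 hw hne, darbouxPotential]
  linear_combination -(ψ₁ x)⁻¹ * riccati

end

/-- Theorem 2.10(i): the Darboux transform Ψ⁺ = 1/ψ₁ of a nonvanishing solution ψ₁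
of Hψ₁ = λ₁ψ₁ satisfies the transformed Schrödinger equation
−Ψ⁺'' + V₊·Ψ⁺ = λ₁·Ψ⁺, where V₊ = V − 2·(ψ₁'/ψ₁)'. -/
theorem darboux_transform_of_particular_solution
    (U : Set ℝ) (hU : IsOpen U) (V : ℝ → ℂ) (lam₁ : ℂ) (ψ₁ : ℝ → ℂ)
    (hd1 : ∀ x ∈ U, DifferentiableAt ℝ ψ₁ x)
    (hd2 : ∀ x ∈ U, DifferentiableAt ℝ (deriv ψ₁) x)
    (hne : ∀ x ∈ U, ψ₁ x ≠ 0)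
    (heq : ∀ x ∈ U, deriv (deriv ψ₁) x = (V x - lam₁) * ψ₁ x)
    (Vplus : ℝ → ℂ)
    (hVplus : ∀ x ∈ U, Vplus x = V x - 2 * deriv (fun t => deriv ψ₁ t / ψ₁ t) x) :
    ∀ x ∈ U,
      -(deriv (deriv (fun t => (ψ₁ t)⁻¹)) x) + Vplus x * (ψ₁ x)⁻¹
        = lam₁ * (ψ₁ x)⁻¹ := by
  intro x hx
  rw [hVplus x hx]
  exact darboux_transform_of_particular_solution_general
    (eventually_of_mem (hU.mem_nhds hx) hd1) (hd2 x hx) (hne x hx) (heq x hx)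
end

section
/- Let U ⊆ ℂ be a nonempty connected open set and W : ℂ → ℂ a function that is (complex-)differentiable on U with derivative differentiable on U. Define the supersymmetric partner potentials V₊ = (W² + W')/2 and V₋ = (W² − W')/2 on U. Then the following are equivalent: (a) there exist polynomials p₁, q₁, p₂, q₂ ∈ ℂ[X] with q₁ ≠ 0 and q₂ ≠ 0 such that q₁(z)·V₊(z) = p₁(z) and q₂(z)·V₋(z) = p₂(z) for all z ∈ U; (b) there exist polynomials p, q ∈ ℂ[X] with q ≠ 0 such that q(z)·W(z) = p(z) for all z ∈ U. -/
/-!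
`W ^ 2` and `W'` are the sum and the difference of the partner potentials. If they are rational,
so is `(W ^ 2)' = 2 * W * W'`, and dividing by `W'` shows that `W` is rational. The division is
impossible only if `W'` vanishes off finitely many points; then `W` is constant by connectedness.
-/

open Filter Polynomial Set Topology

section ZeroDerivative

variable {𝕜 F : Type*} [RCLike 𝕜] [NormedAddCommGroup F] [NormedSpace 𝕜 F] {f : 𝕜 → F}

theorem eq_of_hasDerivAt_zero_lineMap {w z : 𝕜} (hcont : ContinuousAt f z)
    (hderiv : ∀ t ∈ Ico (0 : ℝ) 1, HasDerivAt f 0 (AffineMap.lineMap w z t)) : f w = f z := by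
  let _ : NormedSpace ℝ F := NormedSpace.restrictScalars ℝ 𝕜 F
  have _ : IsScalarTower ℝ 𝕜 F := RestrictScalars.isScalarTower ℝ 𝕜 F
  let γ : ℝ → 𝕜 := AffineMap.lineMap w z
  have hγ_deriv : ∀ t ∈ Ico (0 : ℝ) 1, HasDerivAt (f ∘ γ) 0 t := fun t ht => by
    simpa only [smul_zero] using (hderiv t ht).scomp t AffineMap.hasDerivAt_lineMap
  have hγ_cont_one : ContinuousAt (f ∘ γ) 1 :=
    ContinuousAt.comp_of_eq hcont AffineMap.lineMap_continuous.continuousAt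
      (AffineMap.lineMap_apply_one w z)
  have hγ_cont : ContinuousOn (f ∘ γ) (Icc 0 1) := fun t ht => by
    rcases ht.2.eq_or_lt with rfl | ht_lt
    · exact hγ_cont_one.continuousWithinAt
    · exact (hγ_deriv t ⟨ht.1, ht_lt⟩).continuousAt.continuousWithinAt
  have hγ_const : f (γ 1) = f (γ 0) :=
    constant_of_has_deriv_right_zero hγ_cont (fun t ht => (hγ_deriv t ht).hasDerivWithinAt) 1
      (right_mem_Icc.mpr zero_le_one)
  simpa only [γ, AffineMap.lineMap_apply_zero, AffineMap.lineMap_apply_one] using hγ_const.symm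

theorem hasDerivAt_zero_of_eventually_nhdsNE {z : 𝕜} (hcont : ContinuousAt f z)
    (hderiv : ∀ᶠ w in 𝓝[≠] z, HasDerivAt f 0 w) : HasDerivAt f 0 z := by
  obtain ⟨r, hr, hball⟩ :=
    Metric.eventually_nhds_iff_ball.mp (eventually_nhdsWithin_iff.mp hderiv)
  have hconst : ∀ w ∈ Metric.ball z r, f w = f z := by
    intro w hw
    rcases eq_or_ne w z with rfl | hwz
    · rfl
    refine eq_of_hasDerivAt_zero_lineMap hcont fun t ht => hball _ ?_ ?_
    · exact (convex_ball z r).lineMap_mem hw (Metric.mem_ball_self hr) (Ico_subset_Icc_self ht)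
    · simp [AffineMap.lineMap_eq_right_iff, hwz, ht.2.ne]
  exact (hasDerivAt_const z (f z)).congr_of_eventuallyEq
    (eventually_of_mem (Metric.ball_mem_nhds z hr) hconst)

theorem exists_eqOn_const_of_deriv_eq_zero_off_finite {U s : Set 𝕜} (hU : IsOpen U)
    (hUc : IsPreconnected U) (hs : s.Finite) (hf : DifferentiableOn 𝕜 f U)
    (hderiv : EqOn (deriv f) 0 (U \ s)) : ∃ c, EqOn f (fun _ => c) U := by
  have hf_at : ∀ z ∈ U, DifferentiableAt 𝕜 f z := fun z hz => hf.differentiableAt (hU.mem_nhds hz)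
  refine hU.exists_is_const_of_deriv_eq_zero hUc hf fun z hz => HasDerivAt.deriv <|
    hasDerivAt_zero_of_eventually_nhdsNE (hf_at z hz).continuousAt ?_
  filter_upwards [nhdsNE_le_cofinite z hs.eventually_cofinite_notMem,
    mem_nhdsWithin_of_mem_nhds (hU.mem_nhds hz)] with w hws hwU
  have hw_deriv : deriv f w = 0 := hderiv ⟨hwU, hws⟩
  exact hw_deriv ▸ (hf_at w hwU).hasDerivAt

end ZeroDerivative

/-- `IsRationalOn f U` says that `f` agrees on `U` with a quotient `p / q` of polynomials. The
identity is cleared of denominators, so it puts no constraint on `f` at the zeros of `q`. -/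
def IsRationalOn {R : Type*} [CommRing R] (f : R → R) (U : Set R) : Prop :=
  ∃ p q : R[X], q ≠ 0 ∧ ∀ z ∈ U, q.eval z * f z = p.eval z

namespace IsRationalOn

section CommRing

variable {R : Type*} [CommRing R] {f g : R → R} {U : Set R}

theorem congr (hf : IsRationalOn f U) (hfg : EqOn f g U) : IsRationalOn g U := by
  obtain ⟨p, q, hq, h⟩ := hf
  exact ⟨p, q, hq, fun z hz => by rw [← hfg hz, h z hz]⟩

theorem const [Nontrivial R] (c : R) (U : Set R) : IsRationalOn (fun _ => c) U :=
  ⟨C c, 1, one_ne_zero, fun z _ => by simp⟩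

variable [IsDomain R]

theorem add (hf : IsRationalOn f U) (hg : IsRationalOn g U) : IsRationalOn (f + g) U := by
  obtain ⟨p₁, q₁, hq₁, h₁⟩ := hf
  obtain ⟨p₂, q₂, hq₂, h₂⟩ := hg
  refine ⟨p₁ * q₂ + q₁ * p₂, q₁ * q₂, mul_ne_zero hq₁ hq₂, fun z hz => ?_⟩
  simp only [eval_add, eval_mul, ← h₁ z hz, ← h₂ z hz, Pi.add_apply]
  ring

theorem mul (hf : IsRationalOn f U) (hg : IsRationalOn g U) : IsRationalOn (f * g) U := by
  obtain ⟨p₁, q₁, hq₁, h₁⟩ := hf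
  obtain ⟨p₂, q₂, hq₂, h₂⟩ := hg
  refine ⟨p₁ * p₂, q₁ * q₂, mul_ne_zero hq₁ hq₂, fun z hz => ?_⟩
  simp only [eval_mul, ← h₁ z hz, ← h₂ z hz, Pi.mul_apply]
  ring

theorem const_mul (c : R) (hf : IsRationalOn f U) : IsRationalOn (fun z => c * f z) U :=
  (const c U).mul hf

theorem sub (hf : IsRationalOn f U) (hg : IsRationalOn g U) : IsRationalOn (f - g) U :=
  (hf.add (hg.const_mul (-1))).congr fun z _ => by
    simp only [Pi.add_apply, Pi.sub_apply]
    ring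

theorem of_mul_right {p q : R[X]} (hp : p ≠ 0) (hg : ∀ z ∈ U, q.eval z * g z = p.eval z)
    (hfg : IsRationalOn (f * g) U) : IsRationalOn f U := by
  obtain ⟨p', q', hq', h⟩ := hfg
  refine ⟨q * p', q' * p, mul_ne_zero hq' hp, fun z hz => ?_⟩
  simp only [eval_mul, ← hg z hz, ← h z hz, Pi.mul_apply]
  ring

end CommRing

protected theorem deriv {𝕜 : Type*} [NontriviallyNormedField 𝕜] {f : 𝕜 → 𝕜} {U : Set 𝕜}
    (hf : IsRationalOn f U) (hU : IsOpen U) (hd : DifferentiableOn 𝕜 f U) :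
    IsRationalOn (deriv f) U := by
  obtain ⟨p, q, hq, h⟩ := hf
  refine ⟨derivative p * q - derivative q * p, q ^ 2, pow_ne_zero 2 hq, fun z hz => ?_⟩
  have hqf : (fun w => q.eval w * f w) =ᶠ[𝓝 z] fun w => p.eval w :=
    eventually_of_mem (hU.mem_nhds hz) h
  have hf_z : HasDerivAt f (deriv f z) z := (hd.differentiableAt (hU.mem_nhds hz)).hasDerivAt
  have hprod : (derivative q).eval z * f z + q.eval z * deriv f z = (derivative p).eval z :=
    ((q.hasDerivAt z).mul hf_z).unique ((p.hasDerivAt z).congr_of_eventuallyEq hqf)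
  simp only [eval_sub, eval_mul, eval_pow, ← hprod, ← h z hz]
  ring

variable {𝕜 : Type*} [RCLike 𝕜] {f : 𝕜 → 𝕜} {U : Set 𝕜}

theorem of_deriv_of_mul_deriv (hU : IsOpen U) (hUc : IsPreconnected U)
    (hd : DifferentiableOn 𝕜 f U) (hderiv : IsRationalOn (deriv f) U)
    (hmul : IsRationalOn (f * deriv f) U) : IsRationalOn f U := by
  obtain ⟨p, q, hq, h⟩ := hderiv
  rcases eq_or_ne p 0 with rfl | hp
  · have hzero : EqOn (deriv f) 0 (U \ {z | q.IsRoot z}) := fun z hz =>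
      (mul_eq_zero.mp ((h z hz.1).trans eval_zero)).resolve_left hz.2
    obtain ⟨c, hc⟩ := exists_eqOn_const_of_deriv_eq_zero_off_finite hU hUc
      (finite_setOfPred_isRoot hq) hd hzero
    exact (const c U).congr hc.symm
  · exact of_mul_right hp h hmul

end IsRationalOn

theorem partner_potentials_rational_iff_superpotential_rational_general
    {𝕜 : Type*} [RCLike 𝕜] {U : Set 𝕜} (hU : IsOpen U) (hUc : IsPreconnected U) {W : 𝕜 → 𝕜}
    (hd : DifferentiableOn 𝕜 W U) :
    (IsRationalOn (fun z => (W z ^ 2 + deriv W z) / 2) U ∧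
        IsRationalOn (fun z => (W z ^ 2 - deriv W z) / 2) U) ↔
      IsRationalOn W U := by
  constructor
  · rintro ⟨hplus, hminus⟩
    have hsq : IsRationalOn (W ^ 2) U := (hplus.add hminus).congr fun z _ => by
      simp only [Pi.add_apply, Pi.pow_apply]
      ring
    have hderiv : IsRationalOn (deriv W) U := (hplus.sub hminus).congr fun z _ => by
      simp only [Pi.sub_apply]
      ring
    have hmul : IsRationalOn (W * deriv W) U :=
      ((hsq.deriv hU (hd.pow 2)).const_mul 2⁻¹).congr fun z hz => by
        simp [deriv_pow (hd.differentiableAt (hU.mem_nhds hz)) 2, mul_assoc]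
    exact .of_deriv_of_mul_deriv hU hUc hd hderiv hmul
  · intro hW
    have hsq : IsRationalOn (W * W) U := hW.mul hW
    have hderiv : IsRationalOn (deriv W) U := hW.deriv hU hd
    constructor
    · refine ((hsq.add hderiv).const_mul 2⁻¹).congr fun z _ => ?_
      simp only [Pi.add_apply, Pi.mul_apply]
      ring
    · refine ((hsq.sub hderiv).const_mul 2⁻¹).congr fun z _ => ?_
      simp only [Pi.sub_apply, Pi.mul_apply]
      ring

/-- Proposition 2.12: the supersymmetric partner potentials
V₊ = (W² + W')/2 and V₋ = (W² − W')/2 are rational functions on U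
if and only if the superpotential W is a rational function on U. -/
theorem partner_potentials_rational_iff_superpotential_rational
    (U : Set ℂ) (hne : U.Nonempty) (hconn : IsConnected U) (hopen : IsOpen U)
    (W : ℂ → ℂ)
    (hd1 : ∀ z ∈ U, DifferentiableAt ℂ W z)
    (hd2 : ∀ z ∈ U, DifferentiableAt ℂ (deriv W) z) :
    (∃ p₁ q₁ p₂ q₂ : Polynomial ℂ, q₁ ≠ 0 ∧ q₂ ≠ 0 ∧
        (∀ z ∈ U, q₁.eval z * ((W z ^ 2 + deriv W z) / 2) = p₁.eval z) ∧
        (∀ z ∈ U, q₂.eval z * ((W z ^ 2 - deriv W z) / 2) = p₂.eval z)) ↔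
    (∃ p q : Polynomial ℂ, q ≠ 0 ∧ ∀ z ∈ U, q.eval z * W z = p.eval z) := by
  refine Iff.trans ?_ (partner_potentials_rational_iff_superpotential_rational_general hopen
    hconn.isPreconnected fun z hz => (hd1 z hz).differentiableWithinAt)
  constructor
  · rintro ⟨p₁, q₁, p₂, q₂, hq₁, hq₂, h₁, h₂⟩
    exact ⟨⟨p₁, q₁, hq₁, h₁⟩, ⟨p₂, q₂, hq₂, h₂⟩⟩
  · rintro ⟨⟨p₁, q₁, hq₁, h₁⟩, ⟨p₂, q₂, hq₂, h₂⟩⟩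
    exact ⟨p₁, q₁, p₂, q₂, hq₁, hq₂, h₁, h₂⟩
end

section
/- Let P, Q ∈ ℝ[x,y] and consider the planar polynomial vector field X = P·∂/∂x + Q·∂/∂y. Suppose f₁, …, f_p ∈ ℝ[x,y] are polynomials with cofactors K₁, …, K_p ∈ ℝ[x,y], i.e. P·∂f_i/∂x + Q·∂f_i/∂y = K_i·f_i identically, and suppose g₁, h₁, …, g_q, h_q ∈ ℝ[x,y] are polynomials with cofactors L₁, …, L_q ∈ ℝ[x,y] in the sense that h_j·(P·∂g_j/∂x + Q·∂g_j/∂y) − g_j·(P·∂h_j/∂x + Q·∂h_j/∂y) = L_j·h_j² identically. Let λ₁, …, λ_p, μ₁, …, μ_q ∈ ℝ satisfy Σᵢ λ_i·K_i + Σⱼ μ_j·L_j = 0 as polynomials. Then on any open set Ω ⊆ ℝ² on which every f_i is strictly positive and every h_j is nonvanishing, the function H(x,y) = ∏ᵢ f_i(x,y)^{λ_i} · ∏ⱼ exp(μ_j·g_j(x,y)/h_j(x,y)) (real powers) satisfies P·∂H/∂x + Q·∂H/∂y = 0 on Ω, i.e. H is a first integral of X on Ω. -/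
open MvPolynomial

/-!
A curve `f = 0` with cofactor `K` satisfies `X f = K f`, so on functions the cofactor is a
logarithmic derivative along `X`: it is additive under products and is multiplied by `λ` under
`f ↦ f ^ λ`. By the quotient rule `X (g / h) = L`, so `exp (μ g / h)` has cofactor `μ L`. Hence the
cofactor of the Darboux product is `∑ λᵢ Kᵢ + ∑ μⱼ Lⱼ = 0`.
-/

section PartialDerivatives

variable {𝕜 E σ : Type*} [NontriviallyNormedField 𝕜] [NormedAddCommGroup E] [NormedSpace 𝕜 E]

theorem hasFDerivAt_div {g h : E → 𝕜} {g' h' : E →L[𝕜] 𝕜} {z : E} (hg : HasFDerivAt g g' z)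
    (hh : HasFDerivAt h h' z) (hz : h z ≠ 0) :
    HasFDerivAt (fun w => g w / h w) ((h z ^ 2)⁻¹ • (h z • g' - g z • h')) z := by
  simp only [div_eq_mul_inv]
  refine (hg.mul ((hasDerivAt_inv hz).comp_hasFDerivAt z hh)).congr_fderiv ?_
  ext v
  simp only [add_apply, sub_apply,
    smul_apply, smul_eq_mul, Function.comp_apply]
  field

theorem fderiv_apply_eq_sum_deriv_update [Fintype σ] [DecidableEq σ] {F : (σ → 𝕜) → E}
    {z : σ → 𝕜} (hF : DifferentiableAt 𝕜 F z) (v : σ → 𝕜) :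
    fderiv 𝕜 F z v = ∑ s, v s • deriv (fun t => F (Function.update z s t)) (z s) := by
  have hpartial (s : σ) :
      deriv (fun t => F (Function.update z s t)) (z s) = fderiv 𝕜 F z (Pi.single s 1) := by
    have hF' : HasFDerivAt F (fderiv 𝕜 F z) (Function.update z s (z s)) := by
      simpa only [Function.update_eq_self] using hF.hasFDerivAt
    exact (hF'.comp_hasDerivAt (z s) (hasDerivAt_update z s (z s))).deriv
  simp only [hpartial, ← map_smul, ← map_sum]
  congr 1
  simpa using! pi_eq_sum_univ' v

theorem fderiv_fin_two_apply {F : (Fin 2 → 𝕜) → E} {x y : 𝕜}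
    (hF : DifferentiableAt 𝕜 F ![x, y]) (v : Fin 2 → 𝕜) :
    fderiv 𝕜 F ![x, y] v =
      v 0 • deriv (fun s => F ![s, y]) x + v 1 • deriv (fun t => F ![x, t]) y := by
  have hfst (s : 𝕜) : Function.update ![x, y] 0 s = ![s, y] := Fin.update_cons_zero ..
  have hsnd (t : 𝕜) : Function.update ![x, y] 1 t = ![x, t] := by
    ext i
    fin_cases i <;> rfl
  simpa [Fin.sum_univ_two, hfst, hsnd] using fderiv_apply_eq_sum_deriv_update hF v

theorem mkDerivation_eq_sum_mul_pderiv {R : Type*} [CommSemiring R] [Fintype σ]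
    (V : σ → MvPolynomial σ R) (p : MvPolynomial σ R) :
    mkDerivation R V p = ∑ s, V s * pderiv s p := by
  classical
  have sum_apply (p : MvPolynomial σ R) :
      (∑ s, V s • pderiv s : Derivation R (MvPolynomial σ R) (MvPolynomial σ R)) p =
        ∑ s, V s * pderiv s p := by
    rw [← Derivation.coeFnAddMonoidHom_apply, map_sum, Finset.sum_apply]
    rfl
  rw [← sum_apply]
  congr 1
  refine derivation_ext fun i => ?_
  simp [sum_apply, pderiv_X, Pi.single_apply]

theorem hasFDerivAt_eval [Fintype σ] (p : MvPolynomial σ 𝕜) (z : σ → 𝕜) :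
    HasFDerivAt (fun w => eval w p)
      (∑ s, eval z (pderiv s p) • ContinuousLinearMap.proj (R := 𝕜) (φ := fun _ : σ => 𝕜) s) z := by
  classical
  induction p using MvPolynomial.induction_on with
  | C a =>
    simp only [eval_C]
    refine (hasFDerivAt_const a z).congr_fderiv ?_
    ext v
    simp
  | add p q hp hq =>
    simp only [map_add]
    refine (hp.add hq).congr_fderiv ?_
    ext v
    simp [add_mul, Finset.sum_add_distrib]
  | mul_X p i hp =>
    simp only [map_mul, eval_X]
    refine (hp.mul (hasFDerivAt_apply i z)).congr_fderiv ?_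
    ext v
    simp [pderiv_X, Pi.single_apply, apply_ite (eval z), Finset.sum_add_distrib,
      Finset.mul_sum, add_mul, mul_assoc]

theorem fderiv_eval_apply_vectorField [Finite σ] (V : σ → MvPolynomial σ 𝕜)
    (p : MvPolynomial σ 𝕜) (z : σ → 𝕜) :
    fderiv 𝕜 (fun w => eval w p) z (fun s => eval z (V s)) = eval z (mkDerivation 𝕜 V p) := by
  have := Fintype.ofFinite σ
  simp [(hasFDerivAt_eval p z).fderiv, mkDerivation_eq_sum_mul_pderiv, mul_comm]

end PartialDerivatives

/-- `u` is differentiable at `z` and its derivative along the vector `v` is `k * u z`. This is the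
pointwise form of the cofactor of an invariant curve, where `v` is the value at `z` of the vector
field and `k` that of the cofactor; unlike the polynomial notion it applies to real powers and
exponentials. -/
structure HasCofactorAt {𝕜 E : Type*} [NontriviallyNormedField 𝕜] [NormedAddCommGroup E]
    [NormedSpace 𝕜 E] (v : E) (u : E → 𝕜) (k : 𝕜) (z : E) : Prop where
  differentiableAt : DifferentiableAt 𝕜 u z
  fderiv_apply : fderiv 𝕜 u z v = k * u z

namespace HasCofactorAt

section Field

variable {𝕜 E ι σ : Type*} [NontriviallyNormedField 𝕜] [NormedAddCommGroup E] [NormedSpace 𝕜 E]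
  {v z : E}

theorem mul {u₁ u₂ : E → 𝕜} {k₁ k₂ : 𝕜} (h₁ : HasCofactorAt v u₁ k₁ z)
    (h₂ : HasCofactorAt v u₂ k₂ z) : HasCofactorAt v (fun w => u₁ w * u₂ w) (k₁ + k₂) z where
  differentiableAt := h₁.differentiableAt.mul h₂.differentiableAt
  fderiv_apply := by
    rw [fderiv_fun_mul h₁.differentiableAt h₂.differentiableAt]
    simp only [add_apply, smul_apply, smul_eq_mul,
      h₁.fderiv_apply, h₂.fderiv_apply]
    ring

theorem prod {u : ι → E → 𝕜} {k : ι → 𝕜} (s : Finset ι)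
    (hu : ∀ i ∈ s, HasCofactorAt v (u i) (k i) z) :
    HasCofactorAt v (fun w => ∏ i ∈ s, u i w) (∑ i ∈ s, k i) z := by
  induction s using Finset.cons_induction with
  | empty =>
    simp only [Finset.prod_empty, Finset.sum_empty]
    exact ⟨differentiableAt_const 1, by simp⟩
  | cons a s ha ih =>
    simp only [Finset.prod_cons, Finset.sum_cons]
    rw [Finset.forall_mem_cons] at hu
    exact hu.1.mul (ih hu.2)

theorem eval_of_mkDerivation_eq_mul [Fintype σ] {V : σ → MvPolynomial σ 𝕜}
    {f K : MvPolynomial σ 𝕜} (hf : mkDerivation 𝕜 V f = K * f) (z : σ → 𝕜) :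
    HasCofactorAt (fun s => eval z (V s)) (fun w => eval w f) (eval z K) z where
  differentiableAt := (hasFDerivAt_eval f z).differentiableAt
  fderiv_apply := by rw [fderiv_eval_apply_vectorField, hf, map_mul]

end Field

section Real

variable {E σ : Type*} [NormedAddCommGroup E] [NormedSpace ℝ E] {v z : E}

theorem rpow_const {u : E → ℝ} {k : ℝ} (hu : HasCofactorAt v u k z) (hz : u z ≠ 0) (c : ℝ) :
    HasCofactorAt v (fun w => u w ^ c) (c * k) z where
  differentiableAt := hu.differentiableAt.rpow_const (Or.inl hz)
  fderiv_apply := by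
    rw [(hu.differentiableAt.hasFDerivAt.rpow_const (Or.inl hz)).fderiv,
      smul_apply, hu.fderiv_apply, Real.rpow_sub_one hz, smul_eq_mul]
    field

theorem exp {u : E → ℝ} {u' : E →L[ℝ] ℝ} (hu : HasFDerivAt u u' z) (v : E) :
    HasCofactorAt v (fun w => Real.exp (u w)) (u' v) z where
  differentiableAt := hu.exp.differentiableAt
  fderiv_apply := by
    rw [hu.exp.fderiv, smul_apply, smul_eq_mul, mul_comm]

theorem exp_const_mul_eval_div_eval [Fintype σ] {V : σ → MvPolynomial σ ℝ}
    {g h L : MvPolynomial σ ℝ}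
    (hL : h * mkDerivation ℝ V g - g * mkDerivation ℝ V h = L * h ^ 2)
    {z : σ → ℝ} (hz : eval z h ≠ 0) (c : ℝ) :
    HasCofactorAt (fun s => eval z (V s)) (fun w => Real.exp (c * eval w g / eval w h))
      (c * eval z L) z := by
  have hquot := hasFDerivAt_div (hasFDerivAt_eval g z).differentiableAt.hasFDerivAt
    (hasFDerivAt_eval h z).differentiableAt.hasFDerivAt hz
  have hexp := exp (hquot.const_mul c) fun s => eval z (V s)
  have hLz := congrArg (eval z) hL
  simp only [map_sub, map_mul, map_pow] at hLz
  simp only [smul_apply, sub_apply, smul_eq_mul,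
    fderiv_eval_apply_vectorField, hLz] at hexp
  rw [mul_comm (eval z L), inv_mul_cancel_left₀ (pow_ne_zero 2 hz)] at hexp
  simpa only [mul_div_assoc] using hexp

end Real

end HasCofactorAt

/-- The Darboux product `∏ᵢ fᵢ ^ λᵢ * ∏ⱼ exp (μⱼ gⱼ / hⱼ)` as a function on `σ → ℝ`. At points where
some `hⱼ` vanishes or some `fᵢ` is not positive it takes the default values of division and of the
real power. -/
noncomputable def darbouxFunction {ι κ σ : Type*} [Fintype ι] [Fintype κ]
    (f : ι → MvPolynomial σ ℝ) (g h : κ → MvPolynomial σ ℝ) (lam : ι → ℝ) (mu : κ → ℝ)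
    (z : σ → ℝ) : ℝ :=
  (∏ i, eval z (f i) ^ lam i) * ∏ j, Real.exp (mu j * eval z (g j) / eval z (h j))

theorem darboux_first_integral_general {ι κ σ : Type*} [Fintype ι] [Fintype κ] [Finite σ]
    (V : σ → MvPolynomial σ ℝ) (f K : ι → MvPolynomial σ ℝ) (g h L : κ → MvPolynomial σ ℝ)
    (hf : ∀ i, mkDerivation ℝ V (f i) = K i * f i)
    (hg : ∀ j, h j * mkDerivation ℝ V (g j) - g j * mkDerivation ℝ V (h j) = L j * h j ^ 2)
    (lam : ι → ℝ) (mu : κ → ℝ) (hsum : ∑ i, C (lam i) * K i + ∑ j, C (mu j) * L j = 0)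
    (z : σ → ℝ) (hpos : ∀ i, 0 < eval z (f i)) (hhne : ∀ j, eval z (h j) ≠ 0) :
    DifferentiableAt ℝ (darbouxFunction f g h lam mu) z ∧
      fderiv ℝ (darbouxFunction f g h lam mu) z (fun s => eval z (V s)) = 0 := by
  have := Fintype.ofFinite σ
  have hpow := HasCofactorAt.prod Finset.univ fun i _ =>
    (HasCofactorAt.eval_of_mkDerivation_eq_mul (hf i) z).rpow_const (hpos i).ne' (lam i)
  have hexp := HasCofactorAt.prod Finset.univ fun j _ =>
    HasCofactorAt.exp_const_mul_eval_div_eval (hg j) (hhne j) (mu j)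
  have hcofactor : ∑ i, lam i * eval z (K i) + ∑ j, mu j * eval z (L j) = 0 := by
    simpa using congrArg (eval z) hsum
  have hH := hpow.mul hexp
  rw [hcofactor] at hH
  exact ⟨hH.differentiableAt, hH.fderiv_apply.trans (zero_mul _)⟩

/-- Theorem 2.14(a): the Darboux integrability criterion. If the cofactors of the
invariant algebraic curves f_i and of the exponential factors exp(g_j/h_j) satisfy
Σ λ_i K_i + Σ μ_j L_j = 0, then H = Π f_i^{λ_i} · Π exp(μ_j g_j / h_j) is a first
integral of X = P ∂/∂x + Q ∂/∂y on any open set where the f_i are positive and the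
h_j nonvanishing. -/
theorem darboux_first_integral
    (P Q : MvPolynomial (Fin 2) ℝ) (p q : ℕ)
    (f K : Fin p → MvPolynomial (Fin 2) ℝ)
    (g h L : Fin q → MvPolynomial (Fin 2) ℝ)
    (hf : ∀ i, P * pderiv 0 (f i) + Q * pderiv 1 (f i) = K i * f i)
    (hg : ∀ j, h j * (P * pderiv 0 (g j) + Q * pderiv 1 (g j))
        - g j * (P * pderiv 0 (h j) + Q * pderiv 1 (h j)) = L j * (h j) ^ 2)
    (lam : Fin p → ℝ) (mu : Fin q → ℝ)
    (hsum : ∑ i, C (lam i) * K i + ∑ j, C (mu j) * L j = 0)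
    (Ω : Set (ℝ × ℝ)) (hΩ : IsOpen Ω)
    (hpos : ∀ z ∈ Ω, ∀ i, 0 < eval ![z.1, z.2] (f i))
    (hhne : ∀ z ∈ Ω, ∀ j, eval ![z.1, z.2] (h j) ≠ 0)
    (H : ℝ → ℝ → ℝ)
    (hH : ∀ x y, H x y =
        (∏ i, (eval ![x, y] (f i)) ^ (lam i)) *
        ∏ j, Real.exp (mu j * eval ![x, y] (g j) / eval ![x, y] (h j))) :
    ∀ z ∈ Ω,
      eval ![z.1, z.2] P * deriv (fun s => H s z.2) z.1
        + eval ![z.1, z.2] Q * deriv (fun t => H z.1 t) z.2 = 0 := by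
  intro z hz
  obtain ⟨hdiff, hzero⟩ := darboux_first_integral_general ![P, Q] f K g h L
    (by simpa [mkDerivation_eq_sum_mul_pderiv] using hf)
    (by simpa [mkDerivation_eq_sum_mul_pderiv] using hg) lam mu hsum _ (hpos z hz) (hhne z hz)
  simpa [fderiv_fin_two_apply hdiff, darbouxFunction, hH] using hzero
end

section
/- Let U ⊆ ℂ be an open set, T, N ∈ ℂ[X] polynomials with N nonvanishing on U, and λ ∈ ℂ. Let ζ_λ : ℂ → ℂ be differentiable on U with N(x)·ζ_λ'(x) = T(x) − λ·N(x) − N(x)·ζ_λ(x)² on U, and let g : ℂ → ℂ be differentiable on U with g'(x) = −N'(x)/N(x) − 2·ζ_λ(x) on U. Define R(ζ, x) = exp(g(x)) / (−ζ + ζ_λ(x))². Then R is an integrating factor of the vector field X = (T(x) − λ·N(x) − N(x)·ζ²)·∂/∂ζ + N(x)·∂/∂x: at every point (ζ, x) with x ∈ U and ζ ≠ ζ_λ(x), ∂/∂ζ [R(ζ,x)·(T(x) − λ·N(x) − N(x)·ζ²)] + ∂/∂x [R(ζ,x)·N(x)] = 0. -/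
/-!
Put `D = ζ_λ(x) - ζ` and let `E = exp(g)`, `P = T - λN`. The Riccati equation for `ζ_λ` turns the
`∂/∂ζ`-component `P - N ζ²` into `N (ζ_λ' + D (ζ_λ + ζ))`, so the two partial derivatives are
`2 E N (ζ_λ' / D³ + ζ_λ / D²)` and `(E N)' / D² - 2 E N ζ_λ' / D³`. The triple poles cancel, and the
double poles cancel because `g` is chosen so that `(E N)' = -2 ζ_λ E N`.
-/

section IntegratingFactor

variable {𝕜 : Type*} [NontriviallyNormedField 𝕜]

/-- `R` is an integrating factor at `(ζ, x)` of the vector field `A ∂/∂ζ + B ∂/∂x`, i.e.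
`∂(RA)/∂ζ + ∂(RB)/∂x = 0` there. Both partial derivatives are required to exist, so that the
equation is not one between default values of `deriv`. -/
def IsIntegratingFactorAt (R A B : 𝕜 → 𝕜 → 𝕜) (ζ x : 𝕜) : Prop :=
  ∃ r, HasDerivAt (fun w => R w x * A w x) r ζ ∧ HasDerivAt (fun t => R ζ t * B ζ t) (-r) x

theorem IsIntegratingFactorAt.deriv_add_deriv_eq_zero {R A B : 𝕜 → 𝕜 → 𝕜} {ζ x : 𝕜}
    (h : IsIntegratingFactorAt R A B ζ x) :
    deriv (fun w => R w x * A w x) ζ + deriv (fun t => R ζ t * B ζ t) x = 0 := by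
  obtain ⟨r, hζ, hx⟩ := h
  rw [hζ.deriv, hx.deriv, add_neg_cancel]

theorem hasDerivAt_div_sq {u v : 𝕜 → 𝕜} {u' v' x : 𝕜} (hu : HasDerivAt u u' x)
    (hv : HasDerivAt v v' x) (hvx : v x ≠ 0) :
    HasDerivAt (fun t => u t / v t ^ 2) (u' / v x ^ 2 - 2 * u x * v' / v x ^ 3) x := by
  refine (hu.fun_div (hv.fun_pow 2) (pow_ne_zero 2 hvx)).congr_deriv ?_
  push_cast
  field_simp

theorem hasDerivAt_mul_of_neg_logDeriv_add {E N : 𝕜 → 𝕜} {N' c x : 𝕜} (hNx : N x ≠ 0)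
    (hN : HasDerivAt N N' x) (hE : HasDerivAt E (E x * (-N' / N x + c)) x) :
    HasDerivAt (fun t => E t * N t) (c * (E x * N x)) x := by
  refine (hE.fun_mul hN).congr_deriv ?_
  field_simp
  ring

theorem hasDerivAt_riccati_div_sq {p n e c c' ζ : 𝕜} (hric : n * c' = p - n * c ^ 2)
    (hζ : -ζ + c ≠ 0) :
    HasDerivAt (fun w => e / (-w + c) ^ 2 * (p - n * w ^ 2))
      (2 * (e * n) * (c' / (-ζ + c) ^ 3 + c / (-ζ + c) ^ 2)) ζ := by
  have hfactor : p - n * ζ ^ 2 = n * (c' + (-ζ + c) * (c + ζ)) := by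
    linear_combination -hric
  have hnum : HasDerivAt (fun w => e * (p - n * w ^ 2)) (e * -(n * (2 * ζ))) ζ := by
    simpa using (((hasDerivAt_id' ζ).fun_pow 2).const_mul n).const_sub p |>.const_mul e
  have hden : HasDerivAt (fun w => -w + c) (-1) ζ := (hasDerivAt_neg' ζ).add_const c
  simp only [div_mul_eq_mul_div]
  refine (hasDerivAt_div_sq hnum hden hζ).congr_deriv ?_
  rw [hfactor]
  field_simp
  ring

theorem riccati_integrating_factor_general {P N E ζl : 𝕜 → 𝕜} {N' ζl' ζ x : 𝕜}
    (hNx : N x ≠ 0) (hN : HasDerivAt N N' x) (hζl : HasDerivAt ζl ζl' x)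
    (hric : N x * ζl' = P x - N x * ζl x ^ 2)
    (hE : HasDerivAt E (E x * (-N' / N x - 2 * ζl x)) x) (hζ : ζ ≠ ζl x) :
    IsIntegratingFactorAt (fun w t => E t / (-w + ζl t) ^ 2) (fun w t => P t - N t * w ^ 2)
      (fun _ t => N t) ζ x := by
  have hD : -ζ + ζl x ≠ 0 := by rwa [neg_add_eq_sub, sub_ne_zero, ne_comm]
  have hEN : HasDerivAt (fun t => E t * N t) (-(2 * ζl x) * (E x * N x)) x :=
    hasDerivAt_mul_of_neg_logDeriv_add hNx hN (by rwa [← sub_eq_add_neg])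
  refine ⟨_, hasDerivAt_riccati_div_sq hric hD, ?_⟩
  simp only [div_mul_eq_mul_div]
  refine (hasDerivAt_div_sq hEN (hζl.const_add (-ζ)) hD).congr_deriv ?_
  ring

end IntegratingFactor

/-- Lemma 3.3, integrating-factor item: R(ζ,x) = exp(g(x))/(−ζ + ζ_λ(x))², with
g' = −N'/N − 2ζ_λ, is an integrating factor of the vector field
X = (T − λN − Nζ²)·∂/∂ζ + N·∂/∂x. -/
theorem riccati_integrating_factor
    (U : Set ℂ) (hU : IsOpen U) (T N : Polynomial ℂ) (lam : ℂ)
    (hN : ∀ x ∈ U, N.eval x ≠ 0)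
    (ζl : ℂ → ℂ)
    (hd : ∀ x ∈ U, DifferentiableAt ℂ ζl x)
    (hric : ∀ x ∈ U,
      N.eval x * deriv ζl x = T.eval x - lam * N.eval x - N.eval x * ζl x ^ 2)
    (g : ℂ → ℂ)
    (hgd : ∀ x ∈ U, DifferentiableAt ℂ g x)
    (hg : ∀ x ∈ U, deriv g x = -(Polynomial.derivative N).eval x / N.eval x - 2 * ζl x)
    (R : ℂ → ℂ → ℂ)
    (hR : ∀ ζ x, R ζ x = Complex.exp (g x) / (-ζ + ζl x) ^ 2) :
    ∀ (ζ : ℂ), ∀ x ∈ U, ζ ≠ ζl x →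
      deriv (fun w => R w x * (T.eval x - lam * N.eval x - N.eval x * w ^ 2)) ζ
        + deriv (fun t => R ζ t * N.eval t) x = 0 := by
  intro ζ x hx hζ
  obtain rfl : R = fun ζ x => Complex.exp (g x) / (-ζ + ζl x) ^ 2 := funext₂ hR
  exact (riccati_integrating_factor_general (P := fun t => T.eval t - lam * N.eval t) (hN x hx)
    (N.hasDerivAt x) (hd x hx).hasDerivAt (hric x hx) (hg x hx ▸ (hgd x hx).hasDerivAt.cexp)
    hζ).deriv_add_deriv_eq_zero
end

section
/- Let U ⊆ ℂ be an open set, V : ℂ → ℂ a function, and λ ∈ ℂ. Let ζ₁, ζ₂ : ℂ → ℂ be differentiable on U and satisfy the Riccati equation ζᵢ'(x) = V(x) − λ − ζᵢ(x)² on U for i = 1, 2, and let h : ℂ → ℂ be differentiable on U with h'(x) = ζ₂(x) − ζ₁(x) on U. Define I(ζ, x) = ((−ζ + ζ₂(x)) / (−ζ + ζ₁(x))) · exp(h(x)). Then I is a first integral of the Riccati foliation: at every point (ζ, x) with x ∈ U and ζ ≠ ζ₁(x), ∂I/∂x (ζ, x) + (V(x) − λ − ζ²)·∂I/∂ζ (ζ,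 x) = 0. -/
/-!
Darboux's method: if `F` and `G` are eigenfunctions of a derivation `X` with eigenvalues
(cofactors) `K` and `L`, then `F * G` and `F / G` have cofactors `K + L` and `K - L`, so a
combination with total cofactor `0` is a first integral. For the derivation
`∂/∂x + (a + b ζ + c ζ²) ∂/∂ζ`, a solution `ζᵢ` of the Riccati equation makes `ζᵢ - ζ` an
eigenfunction with cofactor `b + c (ζᵢ + ζ)`. The quotient of two of these has cofactor
`c (ζ₂ - ζ₁)`, independent of `ζ`, which a factor depending on `x` alone can cancel.
-/

section Darboux

variable {𝕜 : Type*} [NontriviallyNormedField 𝕜]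

/-- `F` has cofactor `K` at the point `(ζ, x)` for the vector field `∂/∂x + P ∂/∂ζ`, i.e. this
field maps `F` to `K * F` there; cofactor `0` at every point means that `F` is a first integral.
The cofactor is a scalar because the condition is imposed at a single point, and only the
existence of the two partial derivatives is required, not joint differentiability. -/
def HasCofactorAt_s8 (P F : 𝕜 → 𝕜 → 𝕜) (K ζ x : 𝕜) : Prop :=
  ∃ Fx Fζ : 𝕜, HasDerivAt (fun t => F ζ t) Fx x ∧ HasDerivAt (fun w => F w x) Fζ ζ ∧
    Fx + P ζ x * Fζ = K * F ζ x

namespace HasCofactorAt_s8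

variable {P F G : 𝕜 → 𝕜 → 𝕜} {K L ζ x : 𝕜}

theorem mul_s8 (hF : HasCofactorAt_s8 P F K ζ x) (hG : HasCofactorAt_s8 P G L ζ x) :
    HasCofactorAt_s8 P (fun w t => F w t * G w t) (K + L) ζ x := by
  obtain ⟨Fx, Fζ, hFx, hFζ, hXF⟩ := hF
  obtain ⟨Gx, Gζ, hGx, hGζ, hXG⟩ := hG
  refine ⟨_, _, hFx.fun_mul hGx, hFζ.fun_mul hGζ, ?_⟩
  linear_combination G ζ x * hXF + F ζ x * hXG

theorem inv (hG : HasCofactorAt_s8 P G L ζ x) (hG₀ : G ζ x ≠ 0) :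
    HasCofactorAt_s8 P (fun w t => (G w t)⁻¹) (-L) ζ x := by
  obtain ⟨Gx, Gζ, hGx, hGζ, hXG⟩ := hG
  refine ⟨_, _, hGx.fun_inv hG₀, hGζ.fun_inv hG₀, ?_⟩
  calc -Gx / G ζ x ^ 2 + P ζ x * (-Gζ / G ζ x ^ 2)
      = -(Gx + P ζ x * Gζ) / G ζ x ^ 2 := by ring
    _ = -(L * G ζ x) / G ζ x ^ 2 := by rw [hXG]
    _ = -L * (G ζ x)⁻¹ := by field_simp

theorem div (hF : HasCofactorAt_s8 P F K ζ x) (hG : HasCofactorAt_s8 P G L ζ x) (hG₀ : G ζ x ≠ 0) :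
    HasCofactorAt_s8 P (fun w t => F w t / G w t) (K - L) ζ x := by
  simpa only [div_eq_mul_inv, sub_eq_add_neg] using hF.mul_s8 (hG.inv hG₀)

theorem of_hasDerivAt {E : 𝕜 → 𝕜} (hE : HasDerivAt E (K * E x) x) :
    HasCofactorAt_s8 P (fun _ t => E t) K ζ x :=
  ⟨K * E x, 0, hE, hasDerivAt_const ζ (E x), by ring⟩

theorem neg_add_of_hasDerivAt {s : 𝕜 → 𝕜} (hs : HasDerivAt s (P (s x) x) x)
    (hK : P (s x) x - P ζ x = K * (-ζ + s x)) :
    HasCofactorAt_s8 P (fun w t => -w + s t) K ζ x := by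
  refine ⟨P (s x) x, -1, hs.const_add (-ζ), (hasDerivAt_neg ζ).add_const (s x), ?_⟩
  linear_combination hK

theorem deriv_add_mul_deriv_eq_zero (hF : HasCofactorAt_s8 P F 0 ζ x) :
    deriv (fun t => F ζ t) x + P ζ x * deriv (fun w => F w x) ζ = 0 := by
  obtain ⟨Fx, Fζ, hFx, hFζ, hXF⟩ := hF
  rw [hFx.deriv, hFζ.deriv, hXF, zero_mul]

end HasCofactorAt_s8

theorem hasCofactorAt_neg_add_of_riccati {a b c s : 𝕜 → 𝕜} {x : 𝕜}
    (hs : HasDerivAt s (a x + b x * s x + c x * s x ^ 2) x) (ζ : 𝕜) :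
    HasCofactorAt_s8 (fun w t => a t + b t * w + c t * w ^ 2) (fun w t => -w + s t)
      (b x + c x * (s x + ζ)) ζ x :=
  .neg_add_of_hasDerivAt hs (by ring)

theorem riccati_first_integral_general {a b c ζ₁ ζ₂ E : 𝕜 → 𝕜} {ζ x : 𝕜}
    (hζ₁ : HasDerivAt ζ₁ (a x + b x * ζ₁ x + c x * ζ₁ x ^ 2) x)
    (hζ₂ : HasDerivAt ζ₂ (a x + b x * ζ₂ x + c x * ζ₂ x ^ 2) x)
    (hE : HasDerivAt E (-c x * (ζ₂ x - ζ₁ x) * E x) x) (hζ : ζ ≠ ζ₁ x) :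
    HasCofactorAt_s8 (fun w t => a t + b t * w + c t * w ^ 2)
      (fun w t => (-w + ζ₂ t) / (-w + ζ₁ t) * E t) 0 ζ x := by
  have hden : -ζ + ζ₁ x ≠ 0 := by rwa [Ne, neg_add_eq_zero]
  have hquot := (hasCofactorAt_neg_add_of_riccati hζ₂ ζ).div
    (hasCofactorAt_neg_add_of_riccati hζ₁ ζ) hden
  convert hquot.mul_s8 (.of_hasDerivAt hE) using 1
  ring

end Darboux

/-- Lemma 3.3, first-integral item: if ζ₁, ζ₂ are two solutions of the Riccati
equation ζ' = V − λ − ζ² and h' = ζ₂ − ζ₁, then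
I(ζ,x) = ((−ζ + ζ₂(x))/(−ζ + ζ₁(x)))·exp(h(x)) is a first integral of the Riccati
foliation dζ/dx = V − λ − ζ². -/
theorem riccati_first_integral
    (U : Set ℂ) (hU : IsOpen U) (V : ℂ → ℂ) (lam : ℂ)
    (ζ₁ ζ₂ : ℂ → ℂ)
    (hd₁ : ∀ x ∈ U, DifferentiableAt ℂ ζ₁ x)
    (hd₂ : ∀ x ∈ U, DifferentiableAt ℂ ζ₂ x)
    (hric₁ : ∀ x ∈ U, deriv ζ₁ x = V x - lam - ζ₁ x ^ 2)
    (hric₂ : ∀ x ∈ U, deriv ζ₂ x = V x - lam - ζ₂ x ^ 2)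
    (h : ℂ → ℂ)
    (hhd : ∀ x ∈ U, DifferentiableAt ℂ h x)
    (hh : ∀ x ∈ U, deriv h x = ζ₂ x - ζ₁ x)
    (I : ℂ → ℂ → ℂ)
    (hI : ∀ ζ x, I ζ x = ((-ζ + ζ₂ x) / (-ζ + ζ₁ x)) * Complex.exp (h x)) :
    ∀ (ζ : ℂ), ∀ x ∈ U, ζ ≠ ζ₁ x →
      deriv (fun t => I ζ t) x + (V x - lam - ζ ^ 2) * deriv (fun w => I w x) ζ = 0 := by
  intro ζ x hx hζ
  obtain rfl : I = fun ζ x => (-ζ + ζ₂ x) / (-ζ + ζ₁ x) * Complex.exp (h x) := funext₂ hI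
  have hζ₁ : HasDerivAt ζ₁ (V x - lam + 0 * ζ₁ x + -1 * ζ₁ x ^ 2) x := by
    simpa [hric₁ x hx, sub_eq_add_neg] using (hd₁ x hx).hasDerivAt
  have hζ₂ : HasDerivAt ζ₂ (V x - lam + 0 * ζ₂ x + -1 * ζ₂ x ^ 2) x := by
    simpa [hric₂ x hx, sub_eq_add_neg] using (hd₂ x hx).hasDerivAt
  have hexp : HasDerivAt (fun t => Complex.exp (h t))
      (-(-1) * (ζ₂ x - ζ₁ x) * Complex.exp (h x)) x := by
    simpa [hh x hx, mul_comm] using (hhd x hx).hasDerivAt.cexp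
  simpa [sub_eq_add_neg] using (riccati_first_integral_general (a := fun t => V t - lam)
    (b := fun _ => 0) (c := fun _ => -1) hζ₁ hζ₂ hexp hζ).deriv_add_mul_deriv_eq_zero
end
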